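/- Colliding encodings have equal syndromes: fix a matrix M ∈ F_2^{q×m}. If two inputs v, v' ∈ F_2^m and mask values r, s and r', s' satisfy RE_M(v; r, s) = RE_M(v'; r', s'), then Mv = Mv'. -/

import Mathlib

open Finset

/-- Boundary-extended horizontal mask: `sBext m s i k` is the 1-based `s_{i,k}`
for `k ∈ {1,…,m-1}`, with the boundary convention `s_{i,0} = s_{i,m} = 0`. -/
def sBext (m : ℕ) {q : ℕ} (s : Fin q → Fin (m - 1) → ZMod 2) (i : Fin q) (k : ℕ) :
    ZMod 2 :=
  if h : 1 ≤ k ∧ k ≤ m - 1 then s i ⟨k - 1, by omega⟩ else 0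

/-- `REw x r j i` is the output bit `w_{j+1,i}` (1-based column `j+1`, `w`-index
`i ∈ {0,…,q-1}`): `w_{j,0} = x_j ⊕ r_{j,1}` and `w_{j,i} = r_{j,i} ⊕ r_{j,i+1}`;
here `r j i` denotes `r_{j+1,i+1}` in the 1-based notation. -/
def REw {m q : ℕ} (x : Fin m → ZMod 2) (r : Fin m → Fin q → ZMod 2) :
    Fin m → Fin q → ZMod 2 :=
  fun j i =>
    (if (i : ℕ) = 0 then x j
      else r j ⟨(i : ℕ) - 1, Nat.lt_of_le_of_lt (Nat.sub_le _ _) i.isLt⟩) + r j i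

/-- `REz M r s i j` is the output bit `z_{i+1,j+1}` (1-based):
`z_{i,j} = s_{i,j-1} ⊕ s_{i,j} ⊕ M_{i,j}·r_{j,i}`. -/
def REz {m q : ℕ} (M : Fin q → Fin m → ZMod 2) (r : Fin m → Fin q → ZMod 2)
    (s : Fin q → Fin (m - 1) → ZMod 2) : Fin q → Fin m → ZMod 2 :=
  fun i j => sBext m s i (j : ℕ) + sBext m s i ((j : ℕ) + 1) + M i j * r j i

/-- `aFun w j i = w_{j,0} ⊕ ⋯ ⊕ w_{j,i}` (0-based `i : Fin q`), i.e. the prefix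
parity `a_{j,i+1}` in the 1-based notation of the paper. -/
def aFun {m q : ℕ} (w : Fin m → Fin q → ZMod 2) (j : Fin m) (i : Fin q) : ZMod 2 :=
  ∑ k ∈ Finset.Iic i, w j k

/-!
The syndrome `Mx` can be decoded from the encoding `(w, z)` alone. Setting `r_{j,0} = x_j`, one has
`w_{j,i} = r_{j,i} + r_{j,i+1}` for every `i`, so in characteristic two the prefix parity
`w_{j,0} + ⋯ + w_{j,i-1}` telescopes to `x_j + r_{j,i}`; likewise the masks `s` telescope away in
`∑ j, z_{i,j} = ∑ j, M_{i,j} r_{j,i}`. Weighting the prefix parities by the `i`-th row of `M` and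
adding the `i`-th row sum of `z` cancels the masks `r`.
-/

section Telescoping

variable {R : Type*} [Ring R] [CharP R 2]

theorem sum_range_add_succ_of_charTwo (f : ℕ → R) (n : ℕ) :
    ∑ k ∈ range n, (f k + f (k + 1)) = f 0 + f n := by
  simp only [← CharTwo.sub_eq_add, sum_range_sub']

theorem sum_Iic_castSucc_add_succ_of_charTwo {n : ℕ} (f : Fin (n + 1) → R) (i : Fin n) :
    ∑ k ∈ Iic i, (f k.castSucc + f k.succ) = f 0 + f i.succ := by
  simpa only [CharTwo.sub_eq_add, add_comm] using Fin.sum_Iic_sub i f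

end Telescoping

section Decoding

variable {m q : ℕ}

theorem sBext_zero (s : Fin q → Fin (m - 1) → ZMod 2) (i : Fin q) : sBext m s i 0 = 0 :=
  dif_neg (by omega)

theorem sBext_self (s : Fin q → Fin (m - 1) → ZMod 2) (i : Fin q) : sBext m s i m = 0 :=
  dif_neg (by omega)

theorem sum_REz (M : Fin q → Fin m → ZMod 2) (r : Fin m → Fin q → ZMod 2)
    (s : Fin q → Fin (m - 1) → ZMod 2) (i : Fin q) :
    ∑ j, REz M r s i j = ∑ j, M i j * r j i := by
  have mask_sum : ∑ j : Fin m, (sBext m s i j + sBext m s i (j + 1)) = 0 := by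
    rw [Fin.sum_univ_eq_sum_range (fun k ↦ sBext m s i k + sBext m s i (k + 1)),
      sum_range_add_succ_of_charTwo, sBext_zero, sBext_self, add_zero]
  simp only [REz, sum_add_distrib (g := fun j ↦ M i j * r j i), mask_sum, zero_add]

theorem REw_eq_cons_castSucc_add_cons_succ (x : Fin m → ZMod 2) (r : Fin m → Fin q → ZMod 2)
    (j : Fin m) (i : Fin q) :
    REw x r j i = Fin.cons (α := fun _ ↦ ZMod 2) (x j) (r j) i.castSucc +
      Fin.cons (α := fun _ ↦ ZMod 2) (x j) (r j) i.succ := by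
  obtain ⟨_ | i, hi⟩ := i <;> rfl

theorem aFun_REw (x : Fin m → ZMod 2) (r : Fin m → Fin q → ZMod 2) (j : Fin m) (i : Fin q) :
    aFun (REw x r) j i = x j + r j i := by
  simp_rw [aFun, REw_eq_cons_castSucc_add_cons_succ]
  rw [sum_Iic_castSucc_add_succ_of_charTwo, Fin.cons_zero, Fin.cons_succ]

/-- The decoder of the randomized encoding: it computes the `i`-th bit of the syndrome `Mx` from the
pair `e = (w, z)` alone, as `∑ j, M_{i,j} a_{j,i} + ∑ j, z_{i,j}`, where `a_{j,i}` (1-based) is the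
prefix parity of `w` given by `aFun`. -/
def decodeSyndrome (M : Fin q → Fin m → ZMod 2)
    (e : (Fin m → Fin q → ZMod 2) × (Fin q → Fin m → ZMod 2)) (i : Fin q) : ZMod 2 :=
  ∑ j, M i j * aFun e.1 j i + ∑ j, e.2 i j

theorem decodeSyndrome_REw_REz (M : Fin q → Fin m → ZMod 2) (x : Fin m → ZMod 2)
    (r : Fin m → Fin q → ZMod 2) (s : Fin q → Fin (m - 1) → ZMod 2) (i : Fin q) :
    decodeSyndrome M (REw x r, REz M r s) i = ∑ j, M i j * x j := by
  simp only [decodeSyndrome, aFun_REw, sum_REz, mul_add, sum_add_distrib, CharTwo.add_cancel_right]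

end Decoding

/-- Colliding encodings have equal syndromes: if two inputs
`v, v'` and masks `r, s` and `r', s'` satisfy
`RE_M(v; r, s) = RE_M(v'; r', s')`, then `Mv = Mv'`. -/
theorem colliding_encodings_equal_syndromes {m q : ℕ} (hm : 1 ≤ m) (hq : 1 ≤ q)
    (M : Fin q → Fin m → ZMod 2) (v v' : Fin m → ZMod 2)
    (r r' : Fin m → Fin q → ZMod 2) (s s' : Fin q → Fin (m - 1) → ZMod 2)
    (hcol : (REw v r, REz M r s) = (REw v' r', REz M r' s')) :
    ∀ i : Fin q, ∑ j, M i j * v j = ∑ j, M i j * v' j := by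
  intro i
  rw [← decodeSyndrome_REw_REz M v r s, hcol, decodeSyndrome_REw_REz]
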